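/- Let μ > 0, let g : ℝⁿ → ℝ be a differentiable convex function, and let f : ℝⁿ → ℝ be a differentiable function that is μ-uniformly convex with respect to g and satisfies f(0) = 0 and f(x) ≥ 0 for all x. Let A, B ∈ ℝ with exp(A) ≥ B > 0, let a ∈ [0,1], and let x, v ∈ ℝⁿ. Define Y = x + a·exp(−A)·v and Z = x + exp(−A)·v. Then exp(A)·⟨∇f(Y), Z⟩ ≥ B·f(x) + ⟨∇f(x), v⟩ + μ·B·(D_g(0, Y) + D_g(Y, x)). -/

import Mathlib

open Set RealInnerProductSpace

/-- Bregman divergence `D_g(y, x) = g(y) − g(x) − ⟨∇g(x), y − x⟩`, where `g'`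
is the gradient map of `g`. -/
noncomputable def breg {n : ℕ} (g : EuclideanSpace ℝ (Fin n) → ℝ)
    (g' : EuclideanSpace ℝ (Fin n) → EuclideanSpace ℝ (Fin n))
    (y x : EuclideanSpace ℝ (Fin n)) : ℝ :=
  g y - g x - ⟪g' x, y - x⟫

/-!
Adding the Bregman divergences of `f` at the pairs `(0, Y)` and `(Y, x)` telescopes the function
values, and each of them dominates `μ` times that of `g`; this bounds `⟨∇f(Y), Y⟩` from below.
The remaining part of `Z` is the nonnegative multiple `(1 - a) e^{-A}` of `v`. Since `Y - x` is
also a nonnegative multiple of `v`, monotonicity of `∇f` allows `∇f(Y)` to be replaced by `∇f(x)`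
there. Multiplying by `e^A` and using `e^A ≥ B` on the nonnegative terms finishes the proof.
-/

section BregmanDivergence

variable {E : Type*} [AddCommGroup E] [Module ℝ E] {μ : ℝ} {f g : E → ℝ}
  {f' g' : E → Module.Dual ℝ E}

/-- Bregman divergence of a function `g` on a real vector space; `g' x` is the Gateaux derivative
of `g` at `x`, as a linear functional. -/
def bregmanDiv (g : E → ℝ) (g' : E → Module.Dual ℝ E) (y x : E) : ℝ :=
  g y - g x - g' x (y - x)

theorem bregmanDiv_nonneg_of_convexOn {s : Set E} {x y : E} (hg : ConvexOn ℝ s g)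
    (hx : x ∈ s) (hy : y ∈ s) (hg' : HasLineDerivAt ℝ g (g' x (y - x)) x (y - x)) :
    0 ≤ bregmanDiv g g' y x := by
  have line_convex := hg.comp_affineMap (AffineMap.lineMap x y : ℝ →ᵃ[ℝ] E)
  have line_deriv : HasDerivAt (g ∘ (AffineMap.lineMap x y : ℝ →ᵃ[ℝ] E)) (g' x (y - x)) 0 := by
    simpa only [HasLineDerivAt, Function.comp_def, AffineMap.lineMap_apply_module', add_comm x]
      using hg'
  have deriv_le_slope :=
    line_convex.le_slope_of_hasDerivAt (by simpa using hx) (by simpa using hy) one_pos line_deriv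
  have deriv_le : g' x (y - x) ≤ g y - g x := by simpa [slope_def_field] using deriv_le_slope
  exact sub_nonneg.2 deriv_le

theorem bregmanDiv_add_bregmanDiv (g : E → ℝ) (g' : E → Module.Dual ℝ E) (p y x : E) :
    bregmanDiv g g' p y + bregmanDiv g g' y x = g p - g x + g' y (y - p) - g' x (y - x) := by
  simp only [bregmanDiv, map_sub]
  ring

theorem apply_le_apply_add_smul_of_bregmanDiv_nonneg (hf : ∀ x y, 0 ≤ bregmanDiv f f' x y)
    (x v : E) {t : ℝ} (ht : 0 ≤ t) : f' x v ≤ f' (x + t • v) v := by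
  obtain rfl | ht := ht.eq_or_lt
  · simp
  have monotone_along := add_nonneg (hf x (x + t • v)) (hf (x + t • v) x)
  simp only [bregmanDiv_add_bregmanDiv, add_sub_cancel_left, map_smul, smul_eq_mul, sub_self,
    zero_add, ← mul_sub] at monotone_along
  exact sub_nonneg.1 (nonneg_of_mul_nonneg_right monotone_along ht)

/-- `f` is `μ`-uniformly convex with respect to `g`: its Bregman divergence dominates `μ` times
that of `g`. The derivatives `f'` and `g'` are carried explicitly, as in `bregmanDiv`. -/
def IsUniformlyConvexWrt (μ : ℝ) (f : E → ℝ) (f' : E → Module.Dual ℝ E)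
    (g : E → ℝ) (g' : E → Module.Dual ℝ E) : Prop :=
  ∀ x y, μ * bregmanDiv g g' x y ≤ bregmanDiv f f' x y

namespace IsUniformlyConvexWrt

theorem bregmanDiv_nonneg (hfg : IsUniformlyConvexWrt μ f f' g g') (hμ : 0 ≤ μ)
    (hg : ∀ x y, 0 ≤ bregmanDiv g g' x y) (x y : E) : 0 ≤ bregmanDiv f f' x y :=
  (mul_nonneg hμ (hg x y)).trans (hfg x y)

theorem three_point_inequality (hfg : IsUniformlyConvexWrt μ f f' g g') (p y x : E) :
    f x - f p + μ * (bregmanDiv g g' p y + bregmanDiv g g' y x) + f' x (y - x) ≤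
      f' y (y - p) := by
  have three_point := bregmanDiv_add_bregmanDiv f f' p y x
  linarith [hfg p y, hfg y x]

theorem three_point_inequality_add_smul (hfg : IsUniformlyConvexWrt μ f f' g g') (hμ : 0 ≤ μ)
    (hg : ∀ x y, 0 ≤ bregmanDiv g g' x y) {a t : ℝ} (ha : a ∈ Icc (0 : ℝ) 1) (ht : 0 ≤ t)
    (p x v : E) {y : E} (hy : y = x + (a * t) • v) :
    f x - f p + μ * (bregmanDiv g g' p y + bregmanDiv g g' y x) + t * f' x v ≤
      f' y (x + t • v - p) := by
  have at_y := hfg.three_point_inequality p y x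
  have monotone_along : f' x v ≤ f' y v := hy ▸ apply_le_apply_add_smul_of_bregmanDiv_nonneg
    (hfg.bregmanDiv_nonneg hμ hg) x v (mul_nonneg ha.1 ht)
  have y_sub_x : f' x (y - x) = a * t * f' x v := by simp [hy]
  have z_sub_p : x + t • v - p = (y - p) + ((1 - a) * t) • v := by rw [hy]; module
  calc f x - f p + μ * (bregmanDiv g g' p y + bregmanDiv g g' y x) + t * f' x v
      = f x - f p + μ * (bregmanDiv g g' p y + bregmanDiv g g' y x) + f' x (y - x)
          + (1 - a) * t * f' x v := by rw [y_sub_x]; ring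
    _ ≤ f' y (y - p) + (1 - a) * t * f' y v :=
        add_le_add at_y
          (mul_le_mul_of_nonneg_left monotone_along (mul_nonneg (sub_nonneg.2 ha.2) ht))
    _ = f' y (x + t • v - p) := by simp only [z_sub_p, map_add, map_smul, smul_eq_mul]

end IsUniformlyConvexWrt

theorem godeuc_key_inequality_general (hμ : 0 ≤ μ)
    (hf' : ∀ x v, HasLineDerivAt ℝ f (f' x v) x v) (hg' : ∀ x v, HasLineDerivAt ℝ g (g' x v) x v)
    (hg : ConvexOn ℝ univ g) (hfg : IsUniformlyConvexWrt μ f f' g g') {A B a : ℝ}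
    (hAB : B ≤ Real.exp A) (ha : a ∈ Icc (0 : ℝ) 1) {p x v y z : E} (hp : f p ≤ f x)
    (hy : y = x + (a * Real.exp (-A)) • v) (hz : z = x + Real.exp (-A) • v) :
    B * (f x - f p) + f' x v + μ * B * (bregmanDiv g g' p y + bregmanDiv g g' y x) ≤
      Real.exp A * f' y (z - p) := by
  have hg_nonneg (x y : E) : 0 ≤ bregmanDiv g g' x y :=
    bregmanDiv_nonneg_of_convexOn hg (mem_univ y) (mem_univ x) (hg' y _)
  let gap := f x - f p + μ * (bregmanDiv g g' p y + bregmanDiv g g' y x)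
  have gap_nonneg : 0 ≤ gap :=
    add_nonneg (sub_nonneg.2 hp) (mul_nonneg hμ (add_nonneg (hg_nonneg p y) (hg_nonneg y x)))
  have exp_mul_exp_neg : Real.exp A * Real.exp (-A) = 1 := by simp [← Real.exp_add]
  calc B * (f x - f p) + f' x v + μ * B * (bregmanDiv g g' p y + bregmanDiv g g' y x)
      = B * gap + f' x v := by ring
    _ ≤ Real.exp A * gap + f' x v := by gcongr
    _ = Real.exp A * (gap + Real.exp (-A) * f' x v) := by
        linear_combination -(f' x v) * exp_mul_exp_neg
    _ ≤ Real.exp A * f' y (z - p) := by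
        rw [hz]
        gcongr
        exact hfg.three_point_inequality_add_smul hμ hg_nonneg ha (Real.exp_nonneg _) p x v hy

end BregmanDivergence

theorem breg_eq_bregmanDiv {n : ℕ} (g : EuclideanSpace ℝ (Fin n) → ℝ)
    (g' : EuclideanSpace ℝ (Fin n) → EuclideanSpace ℝ (Fin n)) (y x : EuclideanSpace ℝ (Fin n)) :
    breg g g' y x = bregmanDiv g (fun x ↦ innerₗ _ (g' x)) y x :=
  rfl

/-- Key pointwise inequality in the Lyapunov analysis of (G-ODE-UC):
`e^A ⟨∇f(Y), Z⟩ ≥ B f(x) + ⟨∇f(x), v⟩ + μ B (D_g(0,Y) + D_g(Y,x))` where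
`Y = x + a e^{−A} v` and `Z = x + e^{−A} v`. -/
theorem godeuc_key_inequality {n : ℕ} (μ : ℝ) (hμ : 0 < μ)
    (f g : EuclideanSpace ℝ (Fin n) → ℝ)
    (f' g' : EuclideanSpace ℝ (Fin n) → EuclideanSpace ℝ (Fin n))
    (hf' : ∀ x, HasGradientAt f (f' x) x)
    (hg' : ∀ x, HasGradientAt g (g' x) x)
    (hgconv : ConvexOn ℝ univ g)
    (hunif : ∀ x y, μ * breg g g' x y ≤ breg f f' x y)
    (hf0 : f 0 = 0)
    (hfnn : ∀ x, 0 ≤ f x)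
    (A B : ℝ) (hB : 0 < B) (hAB : B ≤ Real.exp A)
    (a : ℝ) (ha : a ∈ Icc (0 : ℝ) 1)
    (x v Y Z : EuclideanSpace ℝ (Fin n))
    (hY : Y = x + (a * Real.exp (-A)) • v)
    (hZ : Z = x + Real.exp (-A) • v) :
    B * f x + ⟪f' x, v⟫ + μ * B * (breg g g' 0 Y + breg g g' Y x) ≤
      Real.exp A * ⟪f' Y, Z⟫ := by
  simpa only [breg_eq_bregmanDiv, hf0, sub_zero, innerₗ_apply_apply] using
    godeuc_key_inequality_general (p := 0) (f' := fun x ↦ innerₗ _ (f' x))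
      (g' := fun x ↦ innerₗ _ (g' x)) hμ.le (fun x ↦ (hf' x).hasFDerivAt.hasLineDerivAt)
      (fun x ↦ (hg' x).hasFDerivAt.hasLineDerivAt) hgconv hunif hAB ha
      (hf0.trans_le (hfnn x)) hY hZ
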